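/- Let h : ℝ^d → ℝ be continuously differentiable, G-Lipschitz and L-smooth, and let r > 0. Define the smoothed function h^r(z) = E_{v̄ ∼ Uniform(B_d)}[h(z + r v̄)], where B_d is the closed unit ball of ℝ^d, and the two-point estimator G_h(z;r;v) = (d/r)(h(z + r v) − h(z)) · v. Then for every z ∈ ℝ^d, ∇h^r(z) = E_{v ∼ Uniform(S^{d−1})}[G_h(z;r;v)], where S^{d−1} is the unit sphere of ℝ^d. -/

import Mathlib

set_option autoImplicit false

open MeasureTheory Metric
open scoped RealInnerProductSpace ENNReal

noncomputable section

/-- `ℝ^d` as a Euclidean space. -/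
abbrev Euc (n : ℕ) := EuclideanSpace ℝ (Fin n)

/-- The uniform (normalized Lebesgue) probability measure on the closed unit ball of `ℝ^d`. -/
def ballUniform (d : ℕ) : Measure (Euc d) :=
  (volume (closedBall (0 : Euc d) 1))⁻¹ • volume.restrict (closedBall (0 : Euc d) 1)

/-- The uniform (normalized surface) probability measure on the unit sphere of `ℝ^d`,
obtained by normalizing the surface measure `volume.toSphere` and pushing it forward to `ℝ^d`. -/
def sphereUniform (d : ℕ) : Measure (Euc d) :=
  ((volume : Measure (Euc d)).toSphere Set.univ)⁻¹ •
    Measure.map Subtype.val (volume : Measure (Euc d)).toSphere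

/-!
In polar coordinates about the origin, the integral of a continuous `f` over `closedBall y R` is the
integral over unit directions `u` of the radial integral of `s ^ (d - 1) • f (s • u)` up to the
distance at which the ray along `u` leaves the ball. That distance is `R + ⟪u, y⟫ + o(‖y‖)`, so the
fundamental theorem of calculus in the radial variable gives the derivative at `y = 0` as a surface
integral, without differentiating `f`. Translation and rescaling give the gradient of the smoothed
function; `d` appears because the surface area of the unit sphere is `d` times the volume of the
unit ball. The term `h z` of the estimator comes from smoothing `h - h z` instead of `h`.
-/

section

open Set Module Measure

section ExitRadius

variable {E : Type*} [NormedAddCommGroup E] [InnerProductSpace ℝ E] {R : ℝ} {y u : E}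

/-- The distance from the origin at which the ray in the unit direction `u` leaves
`closedBall y R`, for `‖y‖ ≤ R`: the larger root `s` of
`‖s • u - y‖ ^ 2 = s ^ 2 - 2 * s * ⟪u, y⟫ + ‖y‖ ^ 2 = R ^ 2`. -/
def exitRadius (R : ℝ) (y u : E) : ℝ := ⟪u, y⟫ + √(R ^ 2 - ‖y‖ ^ 2 + ⟪u, y⟫ ^ 2)

theorem exitRadius_zero (hR : 0 ≤ R) (u : E) : exitRadius R 0 u = R := by
  simp [exitRadius, Real.sqrt_sq hR]

theorem continuous_exitRadius (R : ℝ) (y : E) : Continuous (exitRadius R y) := by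
  unfold exitRadius
  fun_prop

theorem abs_inner_le_sqrt_sq_sub_norm_sq_add (hy : ‖y‖ ≤ R) (u : E) :
    |⟪u, y⟫| ≤ √(R ^ 2 - ‖y‖ ^ 2 + ⟪u, y⟫ ^ 2) := by
  refine Real.abs_le_sqrt (le_add_of_nonneg_left (sub_nonneg.2 ?_))
  gcongr

theorem exitRadius_nonneg (hy : ‖y‖ ≤ R) (u : E) : 0 ≤ exitRadius R y u := by
  rw [exitRadius]
  linarith [neg_le_of_abs_le (abs_inner_le_sqrt_sq_sub_norm_sq_add hy u)]

theorem smul_mem_closedBall_iff_le_exitRadius (hy : ‖y‖ ≤ R) (hu : ‖u‖ = 1) {s : ℝ} (hs : 0 ≤ s) :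
    s • u ∈ closedBall y R ↔ s ≤ exitRadius R y u := by
  have hR : 0 ≤ R := (norm_nonneg y).trans hy
  have expand : ‖s • u - y‖ ^ 2 = (s - ⟪u, y⟫) ^ 2 + ‖y‖ ^ 2 - ⟪u, y⟫ ^ 2 := by
    rw [norm_sub_sq_real, norm_smul, hu, real_inner_smul_left, mul_one, Real.norm_eq_abs, sq_abs]
    ring
  have hdisc : 0 ≤ R ^ 2 - ‖y‖ ^ 2 + ⟪u, y⟫ ^ 2 :=
    add_nonneg (sub_nonneg.2 (by gcongr)) (sq_nonneg _)
  have hlow : -√(R ^ 2 - ‖y‖ ^ 2 + ⟪u, y⟫ ^ 2) ≤ s - ⟪u, y⟫ := by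
    linarith [(abs_le.1 (abs_inner_le_sqrt_sq_sub_norm_sq_add hy u)).2]
  calc
    s • u ∈ closedBall y R ↔ ‖s • u - y‖ ^ 2 ≤ R ^ 2 := by
      rw [mem_closedBall, dist_eq_norm, sq_le_sq₀ (norm_nonneg _) hR]
    _ ↔ (s - ⟪u, y⟫) ^ 2 ≤ R ^ 2 - ‖y‖ ^ 2 + ⟪u, y⟫ ^ 2 := by
      rw [expand]
      constructor <;> intro h <;> linarith
    _ ↔ s ≤ exitRadius R y u := by
      rw [Real.sq_le hdisc, and_iff_right hlow, sub_le_iff_le_add', exitRadius]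

theorem abs_exitRadius_sub_le (hy : ‖y‖ ≤ R) (hu : ‖u‖ = 1) : |exitRadius R y u - R| ≤ ‖y‖ := by
  have exit_mem : exitRadius R y u • u ∈ closedBall y R :=
    (smul_mem_closedBall_iff_le_exitRadius hy hu (exitRadius_nonneg hy u)).2 le_rfl
  have inner_mem : (R - ‖y‖) • u ∈ closedBall y R := by
    rw [mem_closedBall, dist_eq_norm]
    calc
      ‖(R - ‖y‖) • u - y‖ ≤ ‖(R - ‖y‖) • u‖ + ‖y‖ := norm_sub_le _ _
      _ = R := by rw [norm_smul, hu, Real.norm_of_nonneg (sub_nonneg.2 hy)]; ring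
  have lower := (smul_mem_closedBall_iff_le_exitRadius hy hu (sub_nonneg.2 hy)).1 inner_mem
  have upper : exitRadius R y u ≤ R + ‖y‖ := by
    have := norm_le_of_mem_closedBall exit_mem
    rwa [norm_smul, hu, mul_one, Real.norm_of_nonneg (exitRadius_nonneg hy u), add_comm] at this
  exact abs_sub_le_iff.2 ⟨by linarith, by linarith⟩

theorem hasFDerivAt_exitRadius_zero (hR : 0 < R) (u : E) :
    HasFDerivAt (fun y => exitRadius R y u) (innerSL ℝ u) 0 := by
  have hinner : HasFDerivAt (fun y : E => ⟪u, y⟫) (innerSL ℝ u) 0 := (innerSL ℝ u).hasFDerivAt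
  have hnorm := (hasStrictFDerivAt_norm_sq (0 : E)).hasFDerivAt
  have hsqrt := ((hnorm.const_sub (R ^ 2)).add (hinner.pow 2)).sqrt (by simp [hR.ne'])
  exact (hinner.add hsqrt).congr_fderiv (by ext; simp)

end ExitRadius

theorem setIntegral_closedBall_comp_add_left {E F : Type*} [NormedAddCommGroup E]
    [MeasurableSpace E] [BorelSpace E] [NormedAddCommGroup F] [NormedSpace ℝ F] (μ : Measure E)
    [μ.IsAddLeftInvariant] (f : E → F) (c y : E) (R : ℝ) :
    ∫ x in closedBall y R, f (c + x) ∂μ = ∫ x in closedBall (c + y) R, f x ∂μ := by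
  rw [← (measurePreserving_add_left μ c).setIntegral_preimage_emb (measurableEmbedding_addLeft c) f,
    preimage_add_closedBall, add_sub_cancel_left]

theorem integrable_toSphere_of_continuous {E F : Type*} [NormedAddCommGroup E]
    [NormedSpace ℝ E] [FiniteDimensional ℝ E] [MeasurableSpace E] [BorelSpace E]
    [NormedAddCommGroup F] (μ : Measure E) [μ.IsAddHaarMeasure] {g : sphere (0 : E) 1 → F}
    (hg : Continuous g) : Integrable g μ.toSphere :=
  hg.integrable_of_hasCompactSupport (.of_compactSpace g)

section PolarCoordinates

variable {E F : Type*} [NormedAddCommGroup E] [MeasurableSpace E] [BorelSpace E]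
  [NormedAddCommGroup F] [NormedSpace ℝ F]

theorem integral_volumeIoiPow (n : ℕ) (f : ℝ → F) :
    ∫ s, f s ∂volumeIoiPow n = ∫ s in Ioi 0, s ^ n • f s := by
  simp only [volumeIoiPow, ENNReal.ofReal]
  rw [integral_withDensity_eq_integral_smul (measurable_subtype_coe.pow_const _).real_toNNReal,
    integral_subtype_comap measurableSet_Ioi fun s : ℝ => Real.toNNReal (s ^ n) • f s]
  refine setIntegral_congr_fun measurableSet_Ioi fun s (hs : 0 < s) => ?_
  simp only [NNReal.smul_def, Real.coe_toNNReal _ (pow_nonneg hs.le _)]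

theorem integral_eq_integral_sphere_integral_Ioi [NormedSpace ℝ E] [Nontrivial E]
    [FiniteDimensional ℝ E] (μ : Measure E) [μ.IsAddHaarMeasure] {f : E → F}
    (hf : Integrable f μ) :
    ∫ x, f x ∂μ = ∫ u : sphere (0 : E) 1,
      (∫ s in Ioi (0 : ℝ), s ^ (finrank ℝ E - 1) • f (s • (u : E))) ∂μ.toSphere := by
  set g : sphere (0 : E) 1 × Ioi (0 : ℝ) → F := fun p => f ((p.2 : ℝ) • (p.1 : E)) with hg
  have hmp := μ.measurePreserving_homeomorphUnitSphereProd
  have hemb := (homeomorphUnitSphereProd E).measurableEmbedding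
  have hgf : g ∘ homeomorphUnitSphereProd E = f ∘ Subtype.val := by
    ext x
    simp [hg, smul_smul, norm_ne_zero_iff.2 x.2]
  have hgi : Integrable g (μ.toSphere.prod (volumeIoiPow (finrank ℝ E - 1))) := by
    rw [← hmp.integrable_comp_emb hemb, hgf,
      ← integrableOn_iff_comap_subtypeVal (measurableSet_singleton _).compl]
    exact hf.integrableOn
  calc
    ∫ x, f x ∂μ = ∫ x : ({0}ᶜ : Set E), f x ∂μ.comap (↑) := by
      rw [integral_subtype_comap (measurableSet_singleton _).compl f, restrict_compl_singleton]
    _ = ∫ p, g p ∂μ.toSphere.prod (volumeIoiPow (finrank ℝ E - 1)) := by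
      rw [← hmp.integral_comp hemb]
      exact integral_congr_ae (.of_forall fun x => (congrFun hgf x).symm)
    _ = ∫ u, ∫ s, g (u, s) ∂volumeIoiPow (finrank ℝ E - 1) ∂μ.toSphere := integral_prod g hgi
    _ = _ :=
      integral_congr_ae (.of_forall fun u => integral_volumeIoiPow _ fun s => f (s • (u : E)))

theorem setIntegral_closedBall_eq_integral_sphere [InnerProductSpace ℝ E] [Nontrivial E]
    [FiniteDimensional ℝ E] (μ : Measure E) [μ.IsAddHaarMeasure] {f : E → F} {y : E} {R : ℝ}
    (hf : IntegrableOn f (closedBall y R) μ) (hy : ‖y‖ ≤ R) :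
    ∫ x in closedBall y R, f x ∂μ = ∫ u : sphere (0 : E) 1,
      (∫ s in (0 : ℝ)..exitRadius R y u, s ^ (finrank ℝ E - 1) • f (s • (u : E))) ∂μ.toSphere := by
  rw [← integral_indicator measurableSet_closedBall, integral_eq_integral_sphere_integral_Ioi μ
    ((integrable_indicator_iff measurableSet_closedBall).2 hf)]
  refine integral_congr_ae (.of_forall fun u => ?_)
  have hu : ‖(u : E)‖ = 1 := norm_eq_of_mem_sphere u
  simp only
  rw [intervalIntegral.integral_of_le (exitRadius_nonneg hy _), ← Ioi_inter_Iic,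
    ← setIntegral_indicator measurableSet_Iic]
  refine setIntegral_congr_fun measurableSet_Ioi fun s (hs : 0 < s) => ?_
  simp only [indicator, mem_Iic, smul_mem_closedBall_iff_le_exitRadius hy hu hs.le, smul_ite,
    smul_zero]

end PolarCoordinates

section Derivative

variable {E F : Type*} [NormedAddCommGroup E] [InnerProductSpace ℝ E]
  [NormedAddCommGroup F] [NormedSpace ℝ F] {R : ℝ}

theorem hasFDerivAt_integral_exitRadius_zero [CompleteSpace F] {g : ℝ → F} (hg : Continuous g)
    (hR : 0 < R) (u : E) :
    HasFDerivAt (fun y => ∫ s in (0 : ℝ)..exitRadius R y u, g s)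
      ((innerSL ℝ u).smulRight (g R)) 0 := by
  have h := (hg.integral_hasStrictDerivAt 0 (exitRadius R 0 u)).hasDerivAt.hasFDerivAt.comp
    (0 : E) (hasFDerivAt_exitRadius_zero hR u)
  rw [exitRadius_zero hR.le] at h
  exact h.congr_fderiv (by ext; simp)

theorem norm_integral_exitRadius_sub_le {g : ℝ → F} (hg : Continuous g) {C : ℝ}
    (hC : ∀ s ∈ Icc 0 (2 * R), ‖g s‖ ≤ C) {y u : E} (hy : ‖y‖ ≤ R) (hu : ‖u‖ = 1) :
    ‖(∫ s in (0 : ℝ)..exitRadius R y u, g s) - ∫ s in (0 : ℝ)..R, g s‖ ≤ C * ‖y‖ := by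
  have hR : 0 ≤ R := (norm_nonneg y).trans hy
  have hdist := abs_exitRadius_sub_le hy hu
  have hexit : exitRadius R y u ∈ Icc 0 (2 * R) :=
    ⟨exitRadius_nonneg hy u, by linarith [(abs_le.1 hdist).2]⟩
  have hsub : uIoc R (exitRadius R y u) ⊆ Icc 0 (2 * R) :=
    uIoc_subset_uIcc.trans (ordConnected_Icc.uIcc_subset ⟨hR, by linarith⟩ hexit)
  rw [intervalIntegral.integral_interval_sub_left (hg.intervalIntegrable _ _)
    (hg.intervalIntegrable _ _)]
  calc
    ‖∫ s in R..exitRadius R y u, g s‖ ≤ C * |exitRadius R y u - R| :=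
      intervalIntegral.norm_integral_le_of_norm_le_const fun s hs => hC s (hsub hs)
    _ ≤ C * ‖y‖ := by
      gcongr
      exact (norm_nonneg _).trans (hC 0 ⟨le_rfl, by linarith⟩)

variable [Nontrivial E] [FiniteDimensional ℝ E] [MeasurableSpace E] [BorelSpace E]
  [CompleteSpace F] (μ : Measure E) [μ.IsAddHaarMeasure] {f : E → F}

theorem hasFDerivAt_setIntegral_closedBall_zero (hf : Continuous f) (hR : 0 < R) :
    HasFDerivAt (fun y => ∫ x in closedBall y R, f x ∂μ)
      (∫ u : sphere (0 : E) 1, (innerSL ℝ (u : E)).smulRight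
        (R ^ (finrank ℝ E - 1) • f (R • (u : E))) ∂μ.toSphere) 0 := by
  set n := finrank ℝ E - 1
  have hcont : Continuous fun p : sphere (0 : E) 1 × ℝ => p.2 ^ n • f (p.2 • (p.1 : E)) := by
    fun_prop
  have hray (u : sphere (0 : E) 1) : Continuous fun s : ℝ => s ^ n • f (s • (u : E)) := by
    fun_prop
  have hradial (y : E) : Continuous fun u : sphere (0 : E) 1 =>
      ∫ s in (0 : ℝ)..exitRadius R y u, s ^ n • f (s • (u : E)) :=
    intervalIntegral.continuous_parametric_intervalIntegral_of_continuous hcont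
      ((continuous_exitRadius R y).comp continuous_subtype_val)
  obtain ⟨C, hC⟩ := (isCompact_univ.prod (isCompact_Icc (a := 0) (b := 2 * R)))
    |>.exists_bound_of_continuousOn hcont.continuousOn
  have hpolar : (fun y => ∫ x in closedBall y R, f x ∂μ) =ᶠ[nhds 0] fun y =>
      ∫ u : sphere (0 : E) 1, (∫ s in (0 : ℝ)..exitRadius R y u, s ^ n • f (s • (u : E)))
        ∂μ.toSphere := by
    filter_upwards [closedBall_mem_nhds 0 hR] with y hy
    exact setIntegral_closedBall_eq_integral_sphere μ
      (hf.continuousOn.integrableOn_compact (isCompact_closedBall y R))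
      (mem_closedBall_zero_iff.1 hy)
  refine HasFDerivAt.congr_of_eventuallyEq ?_ hpolar
  refine (hasFDerivAt_integral_of_dominated_loc_of_lip' (bound := fun _ => C)
    (closedBall_mem_nhds 0 hR) (fun y _ => (hradial y).aestronglyMeasurable)
    (integrable_toSphere_of_continuous μ (hradial 0))
    (integrable_toSphere_of_continuous μ (by fun_prop)).aestronglyMeasurable
    (.of_forall fun u y hy => ?_) (integrable_const C)
    (.of_forall fun u => hasFDerivAt_integral_exitRadius_zero (hray u) hR (u : E))).2
  rw [exitRadius_zero hR.le, sub_zero]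
  exact norm_integral_exitRadius_sub_le (hray u) (fun s hs => hC (u, s) ⟨mem_univ u, hs⟩)
    (mem_closedBall_zero_iff.1 hy) (norm_eq_of_mem_sphere u)

theorem hasFDerivAt_setIntegral_closedBall (hf : Continuous f) (hR : 0 < R) (c : E) :
    HasFDerivAt (fun y => ∫ x in closedBall y R, f x ∂μ)
      (∫ u : sphere (0 : E) 1, (innerSL ℝ (u : E)).smulRight
        (R ^ (finrank ℝ E - 1) • f (c + R • (u : E))) ∂μ.toSphere) c := by
  have htranslate (y : E) :
      ∫ x in closedBall y R, f x ∂μ = ∫ x in closedBall (y - c) R, f (c + x) ∂μ := by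
    rw [setIntegral_closedBall_comp_add_left, add_sub_cancel]
  have hzero := hasFDerivAt_setIntegral_closedBall_zero μ (hf.comp (continuous_const_add c)) hR
  simp only [htranslate]
  exact (hasFDerivAt_comp_sub c (f := fun y => ∫ x in closedBall y R, f (c + x) ∂μ)).2
    (by simpa only [sub_self, Function.comp_apply] using hzero)

theorem hasFDerivAt_setIntegral_closedBall_comp_add_smul (hf : Continuous f) {r : ℝ} (hr : r ≠ 0)
    (z : E) :
    HasFDerivAt (fun z' => ∫ v in closedBall 0 1, f (z' + r • v) ∂μ)
      (r⁻¹ • ∫ u : sphere (0 : E) 1, (innerSL ℝ (u : E)).smulRight (f (z + r • (u : E)))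
        ∂μ.toSphere) z := by
  have hrescale (z' : E) : ∫ v in closedBall 0 1, f (z' + r • v) ∂μ =
      ∫ x in closedBall (r⁻¹ • z') 1, f (r • x) ∂μ := by
    simpa [smul_inv_smul₀ hr] using
      setIntegral_closedBall_comp_add_left μ (fun x => f (r • x)) (r⁻¹ • z') 0 1
  have h := (hasFDerivAt_setIntegral_closedBall μ (hf.comp (continuous_const_smul r)) one_pos
    (r⁻¹ • z)).comp z ((hasFDerivAt_id z).const_smul r⁻¹)
  simp only [hrescale]
  refine h.congr_fderiv ?_
  ext
  simp [smul_inv_smul₀ hr]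

end Derivative

theorem setAverage_closedBall_eq {E F : Type*} [NormedAddCommGroup E] [NormedSpace ℝ E]
    [FiniteDimensional ℝ E] [Nontrivial E] [MeasurableSpace E] [BorelSpace E]
    [NormedAddCommGroup F] [NormedSpace ℝ F] (μ : Measure E) [μ.IsAddHaarMeasure] (f : E → F)
    (c : E) (R : ℝ) :
    ⨍ v in closedBall c R, f v ∂μ = (μ.real (ball c R))⁻¹ • ∫ v in closedBall c R, f v ∂μ := by
  rw [setAverage_eq, measureReal_def, measureReal_def, addHaar_closedBall_eq_addHaar_ball]

section Average

variable {E : Type*} [NormedAddCommGroup E] [InnerProductSpace ℝ E] [FiniteDimensional ℝ E]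
  [MeasurableSpace E] [BorelSpace E] (μ : Measure E) [μ.IsAddHaarMeasure]

theorem toDual_integral_smul_sphere {k : sphere (0 : E) 1 → ℝ} (hk : Continuous k) :
    InnerProductSpace.toDual ℝ E (∫ u, k u • (u : E) ∂μ.toSphere) =
      ∫ u : sphere (0 : E) 1, (innerSL ℝ (u : E)).smulRight (k u) ∂μ.toSphere := by
  ext w
  rw [ContinuousLinearMap.integral_apply (integrable_toSphere_of_continuous μ (by fun_prop)),
    InnerProductSpace.toDual_apply_apply, real_inner_comm,
    ← integral_inner (integrable_toSphere_of_continuous μ (by fun_prop))]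
  simp [inner_smul_right, real_inner_comm, mul_comm]

variable [Nontrivial E] {h : E → ℝ} {r : ℝ}

theorem hasGradientAt_setAverage_closedBall_comp_add_smul (hh : Continuous h) (hr : r ≠ 0) (z : E) :
    HasGradientAt (fun z' => ⨍ v in closedBall 0 1, h (z' + r • v) ∂μ)
      (⨍ v : sphere (0 : E) 1, ((finrank ℝ E : ℝ) / r * h (z + r • (v : E))) • (v : E)
        ∂μ.toSphere) z := by
  have hdim : (finrank ℝ E : ℝ) ≠ 0 := Nat.cast_ne_zero.2 finrank_pos.ne'
  simp only [setAverage_closedBall_eq]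
  refine ((hasFDerivAt_setIntegral_closedBall_comp_add_smul μ hh hr z).const_smul
    (μ.real (ball 0 1))⁻¹).congr_fderiv ?_
  rw [← toDual_integral_smul_sphere μ (by fun_prop), average_eq, toSphere_real_apply_univ,
    ← map_smul, ← map_smul]
  have hscalar : (finrank ℝ E * μ.real (ball 0 1))⁻¹ * (finrank ℝ E / r) =
      (μ.real (ball 0 1))⁻¹ * r⁻¹ := by
    field_simp
  simp_rw [mul_smul _ (h _)]
  rw [integral_smul, smul_smul, smul_smul, hscalar]

theorem two_point_estimator_unbiased_for_smoothed_general (hh : Continuous h) (hr : r ≠ 0) (z : E) :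
    HasGradientAt (fun z' => ⨍ v in closedBall 0 1, h (z' + r • v) ∂μ)
      (⨍ v : sphere (0 : E) 1, ((finrank ℝ E : ℝ) / r * (h (z + r • (v : E)) - h z)) • (v : E)
        ∂μ.toSphere) z := by
  have hcentered := hasGradientAt_setAverage_closedBall_comp_add_smul μ
    (hh.sub (continuous_const (y := h z))) hr z
  have hadd (z' : E) : ⨍ v in closedBall 0 1, h (z' + r • v) ∂μ =
      (⨍ v in closedBall 0 1, (h (z' + r • v) - h z) ∂μ) + h z := by
    have hint : IntegrableOn (fun v => h (z' + r • v)) (closedBall 0 1) μ :=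
      (by fun_prop : Continuous fun v => h (z' + r • v)).continuousOn.integrableOn_compact
        (isCompact_closedBall 0 1)
    have hconst : ⨍ _ in closedBall (0 : E) 1, h z ∂μ = h z :=
      setAverage_const (measure_closedBall_pos μ 0 one_pos).ne' measure_closedBall_lt_top.ne _
    rw [setAverage_eq] at hconst ⊢
    rw [setAverage_eq, integral_sub hint (integrableOn_const measure_closedBall_lt_top.ne),
      smul_sub, hconst, sub_add_cancel]
  simp only [hadd]
  exact HasFDerivAt.add_const _ hcentered

end Average

theorem integral_ballUniform {d : ℕ} {F : Type*} [NormedAddCommGroup F] [NormedSpace ℝ F]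
    (f : Euc d → F) : ∫ v, f v ∂ballUniform d = ⨍ v in closedBall 0 1, f v := by
  rw [ballUniform, average, restrict_apply_univ]

theorem integral_sphereUniform {d : ℕ} {F : Type*} [NormedAddCommGroup F] [NormedSpace ℝ F]
    (f : Euc d → F) :
    ∫ v, f v ∂sphereUniform d =
      ⨍ v : sphere (0 : Euc d) 1, f v ∂(volume : Measure (Euc d)).toSphere := by
  rw [sphereUniform, average, ← Measure.map_smul,
    (MeasurableEmbedding.subtype_coe isClosed_sphere.measurableSet).integral_map]

end

/-- **Unbiasedness of the two-point gradient estimator for the smoothed function.**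
If `h : ℝ^d → ℝ` is continuously differentiable, `G`-Lipschitz and `L`-smooth, `r > 0`,
and `h^r(z) = E_{v̄ ∼ U(B_d)}[h(z + r v̄)]`, then for every `z`,
`∇h^r(z) = E_{v ∼ U(S^{d-1})}[(d/r)(h(z + r v) - h(z)) v]`. -/
theorem two_point_estimator_unbiased_for_smoothed
    {d : ℕ} (hd : 0 < d) (h : Euc d → ℝ) (G L : ℝ)
    (hC1 : ContDiff ℝ 1 h)
    (hLip : ∀ z₁ z₂ : Euc d, |h z₁ - h z₂| ≤ G * ‖z₁ - z₂‖)
    (hsmooth : ∀ z₁ z₂ : Euc d, ‖gradient h z₁ - gradient h z₂‖ ≤ L * ‖z₁ - z₂‖)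
    (r : ℝ) (hr : 0 < r) (z : Euc d) :
    gradient (fun z' => ∫ v, h (z' + r • v) ∂(ballUniform d)) z
      = ∫ v, (((d : ℝ) / r) * (h (z + r • v) - h z)) • v ∂(sphereUniform d) := by
  have : Nontrivial (Euc d) := have : NeZero d := ⟨hd.ne'⟩; inferInstance
  simpa [integral_ballUniform, integral_sphereUniform] using
    (two_point_estimator_unbiased_for_smoothed_general volume hC1.continuous hr.ne' z).gradient


end
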